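/- arXiv:2203.06738 — 3 statements merged into one kernel-verified Lean document; each statement's English description precedes it below -/
import Mathlib

section
/- Let X be a complex Banach space and T a bounded linear operator on X. Then the g_z-invertible spectrum of T equals the set of accumulation points of the set of accumulation points of the spectrum of T; that is, for every λ ∈ ℂ, the operator T − λI is g_z-invertible if and only if λ is not an accumulation point of acc σ(T). -/
open Filter Set Function

variable {X : Type*} [NormedAddCommGroup X] [NormedSpace ℂ X] [CompleteSpace X]

/-- Accumulation points of a subset of `ℂ`. -/
def accSet (A : Set ℂ) : Set ℂ := {z : ℂ | AccPt z (Filter.principal A)}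

/-- `(M, N) ∈ Red(T)`: a pair of closed `T`-invariant subspaces with `X = M ⊕ N`. -/
def Red (T : X →L[ℂ] X) (M N : Submodule ℂ X) : Prop :=
  IsClosed (M : Set X) ∧ IsClosed (N : Set X) ∧ (∀ x ∈ M, T x ∈ M) ∧ (∀ x ∈ N, T x ∈ N) ∧
    IsCompl M N

open Classical in
/-- Restriction of `T` to a `T`-invariant subspace `M` (junk value `0` if `M` is not invariant). -/
noncomputable def restrictCLM (T : X →L[ℂ] X) (M : Submodule ℂ X) : M →L[ℂ] M :=
  if h : ∀ x ∈ M, T x ∈ M then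
    { toLinearMap := (T : X →ₗ[ℂ] X).restrict h
      cont := by exact (T.continuous.comp continuous_subtype_val).subtype_mk _ }
  else 0

/-- An operator is zeroloid if the accumulation points of its spectrum are contained in `{0}`. -/
def Zeroloid {Y : Type*} [NormedAddCommGroup Y] [NormedSpace ℂ Y] (S : Y →L[ℂ] Y) : Prop :=
  accSet (spectrum ℂ S) ⊆ {0}

/-- `T` is `g_z`-invertible. -/
def GzInvertible (T : X →L[ℂ] X) : Prop :=
  ∃ M N : Submodule ℂ X, Red T M N ∧ Function.Bijective (restrictCLM T M) ∧
    Zeroloid (restrictCLM T N)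

section RieszAux

open Metric

variable {A : Type*} [NormedRing A] [NormedAlgebra ℂ A] [CompleteSpace A]

lemma aux_const_mul_circle {f : ℂ → A} {R : ℝ} (hf : CircleIntegrable f 0 R) (c : A) :
    c * (∮ z in C(0, R), f z) = ∮ z in C(0, R), c * f z := by
  have h := (ContinuousLinearMap.mul ℂ A c).intervalIntegral_comp_comm hf.out
  simp only [circleIntegral]
  simpa using h.symm

lemma aux_circle_mul_const {f : ℂ → A} {R : ℝ} (hf : CircleIntegrable f 0 R) (c : A) :
    (∮ z in C(0, R), f z) * c = ∮ z in C(0, R), f z * c := by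
  have h := ((ContinuousLinearMap.mul ℂ A).flip c).intervalIntegral_comp_comm hf.out
  simp only [circleIntegral]
  simpa using h.symm

lemma aux_commute_circle {f : ℂ → A} {R : ℝ} (hR : 0 ≤ R) (hf : CircleIntegrable f 0 R) (c : A)
    (h : ∀ z ∈ sphere (0 : ℂ) R, Commute c (f z)) : Commute c (∮ z in C(0, R), f z) := by
  unfold Commute SemiconjBy
  rw [aux_const_mul_circle hf, aux_circle_mul_const hf]
  exact circleIntegral.integral_congr hR fun z hz => h z hz

lemma aux_commute_resolvent {S c : A} (h : Commute c S) (z : ℂ) : Commute c (resolvent S z) := by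
  by_cases hz : IsUnit (algebraMap ℂ A z - S)
  · have h1 : Commute c (algebraMap ℂ A z - S) :=
      Commute.sub_right (Algebra.commutes z c).symm h
    obtain ⟨u, hu⟩ := hz
    rw [resolvent, ← hu, Ring.inverse_unit]
    rw [← hu] at h1
    exact h1.units_inv_right
  · rw [resolvent, Ring.inverse_non_unit _ hz]
    exact Commute.zero_right c

lemma aux_integral_outside {b : ℝ} (hb : 0 < b) {w : ℂ} (hw : b < ‖w‖) :
    (∮ z in C(0, b), (z - w)⁻¹) = 0 := by
  have hne : ∀ z ∈ closedBall (0 : ℂ) b, z - w ≠ 0 := by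
    intro z hz h
    rw [sub_eq_zero] at h
    subst h
    simp at hz
    linarith
  refine Complex.circleIntegral_eq_zero_of_differentiable_on_off_countable hb.le
    (s := ∅) countable_empty ?_ ?_
  · exact (continuousOn_id.sub continuousOn_const).inv₀ hne
  · intro z hz
    exact (differentiableAt_id.sub_const w).inv (hne z (ball_subset_closedBall hz.1))

theorem aux_riesz (S : A) {a b : ℝ} (ha : 0 < a) (hab : a < b)
    (h : ∀ z ∈ spectrum ℂ S, ¬ (a ≤ ‖z‖ ∧ ‖z‖ ≤ b)) :
    ∃ P : A, P * P = P ∧ Commute P S ∧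
      (∀ w : ℂ, ‖w‖ < b → ∃ Q : A, Commute Q S ∧ Commute Q P ∧
        (algebraMap ℂ A w - S) * Q = 1 - P) ∧
      (∀ w : ℂ, b < ‖w‖ → ∃ Q : A, Commute Q S ∧ Commute Q P ∧
        (algebraMap ℂ A w - S) * Q = P) := by
  have hb : 0 < b := ha.trans hab
  have hres : ∀ z : ℂ, a ≤ ‖z‖ → ‖z‖ ≤ b → z ∈ resolventSet ℂ S := by
    intro z h1 h2
    by_contra h3
    exact h z h3 ⟨h1, h2⟩
  have hdiff : ∀ z : ℂ, a ≤ ‖z‖ → ‖z‖ ≤ b → DifferentiableAt ℂ (resolvent S) z :=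
    fun z h1 h2 => (spectrum.hasDerivAt_resolvent_const_left (hres z h1 h2)).differentiableAt
  have hmul : ∀ z : ℂ, a ≤ ‖z‖ → ‖z‖ ≤ b → (algebraMap ℂ A z - S) * resolvent S z = 1 :=
    fun z h1 h2 => Ring.mul_inverse_cancel _ (hres z h1 h2)
  have hmul' : ∀ z : ℂ, a ≤ ‖z‖ → ‖z‖ ≤ b → resolvent S z * (algebraMap ℂ A z - S) = 1 :=
    fun z h1 h2 => Ring.inverse_mul_cancel _ (hres z h1 h2)
  have hcb : ContinuousOn (resolvent S) (sphere (0 : ℂ) b) := fun z hz => by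
    have : ‖z‖ = b := by simpa using hz
    exact (hdiff z (by linarith) this.le).continuousAt.continuousWithinAt
  have hca : ContinuousOn (resolvent S) (sphere (0 : ℂ) a) := fun z hz => by
    have : ‖z‖ = a := by simpa using hz
    exact (hdiff z this.ge (by linarith)).continuousAt.continuousWithinAt
  have hib : CircleIntegrable (resolvent S) 0 b := hcb.circleIntegrable hb.le
  have hia : CircleIntegrable (resolvent S) 0 a := hca.circleIntegrable ha.le
  set k : ℂ := (2 * Real.pi * Complex.I : ℂ)⁻¹ with hk
  have hk0 : k * (2 * Real.pi * Complex.I) = 1 := inv_mul_cancel₀ Complex.two_pi_I_ne_zero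
  set P : A := k • ∮ z in C(0, b), resolvent S z with hP
  set Q : ℂ → A := fun w => k • ∮ z in C(0, b), (z - w)⁻¹ • resolvent S z with hQ
  have hinv : ∀ w : ℂ, ‖w‖ ≠ b → ContinuousOn (fun z : ℂ => (z - w)⁻¹) (sphere (0 : ℂ) b) := by
    intro w hw
    refine (continuousOn_id.sub continuousOn_const).inv₀ ?_
    intro z hz hzw
    have : ‖z‖ = b := by simpa using hz
    have hzw' : z = w := sub_eq_zero.1 hzw
    subst hzw'
    exact hw this
  have hiQ : ∀ w : ℂ, ‖w‖ ≠ b →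
      CircleIntegrable (fun z : ℂ => (z - w)⁻¹ • resolvent S z) 0 b := fun w hw =>
    ((hinv w hw).smul hcb).circleIntegrable hb.le
  have hPc : ∀ c : A, Commute c S → Commute c P := fun c hc =>
    (aux_commute_circle hb.le hib c fun z _ => aux_commute_resolvent hc z).smul_right k
  have hQc : ∀ w : ℂ, ‖w‖ ≠ b → Commute (Q w) S := fun w hw =>
    ((aux_commute_circle hb.le (hiQ w hw) S fun z _ =>
      (aux_commute_resolvent (Commute.refl S) z).smul_right _).smul_right k).symm
  have key : ∀ w : ℂ, ‖w‖ ≠ b → (algebraMap ℂ A w - S) * Q w =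
      (k * ∮ z in C(0, b), (z - w)⁻¹) • (1 : A) - P := by
    intro w hw
    have h1 : (algebraMap ℂ A w - S) * (∮ z in C(0, b), (z - w)⁻¹ • resolvent S z) =
        ∮ z in C(0, b), ((z - w)⁻¹ • (1 : A) - resolvent S z) := by
      rw [aux_const_mul_circle (hiQ w hw)]
      refine circleIntegral.integral_congr hb.le fun z hz => ?_
      have hz' : ‖z‖ = b := by simpa using hz
      have hzw : z - w ≠ 0 := by
        intro h0
        rw [sub_eq_zero] at h0
        subst h0
        exact hw hz'
      have h2 := hmul z (by linarith) hz'.le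
      have h3 : algebraMap ℂ A w - S = (algebraMap ℂ A z - S) - (z - w) • (1 : A) := by
        simp only [Algebra.algebraMap_eq_smul_one, sub_smul]
        abel
      rw [mul_smul_comm, h3, sub_mul, h2, smul_mul_assoc, one_mul, smul_sub, smul_smul,
        inv_mul_cancel₀ hzw, one_smul]
    have h4 : CircleIntegrable (fun z : ℂ => (z - w)⁻¹ • (1 : A)) 0 b :=
      ((hinv w hw).smul continuousOn_const).circleIntegrable hb.le
    rw [circleIntegral.integral_sub h4 hib, circleIntegral.integral_smul_const] at h1
    simp only [hQ, hP]
    rw [mul_smul_comm, h1, smul_sub, smul_smul]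
  have key1 : ∀ w : ℂ, ‖w‖ < b → (algebraMap ℂ A w - S) * Q w = 1 - P := by
    intro w hw
    rw [key w hw.ne, circleIntegral.integral_sub_inv_of_mem_ball (by simpa using hw), hk0, one_smul]
  have key2 : ∀ w : ℂ, b < ‖w‖ → (algebraMap ℂ A w - S) * (-Q w) = P := by
    intro w hw
    rw [mul_neg, key w hw.ne', aux_integral_outside hb hw]
    simp
  have hPS : Commute P S := (hPc S (Commute.refl S)).symm
  have hPa : P = k • ∮ z in C(0, a), resolvent S z := by
    rw [hP]
    congr 1
    refine Complex.circleIntegral_eq_of_differentiable_on_annulus_off_countable ha hab.le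
      (s := ∅) countable_empty ?_ ?_
    · intro z hz
      have h1 : ‖z‖ ≤ b := by simpa using hz.1
      have h2 : a ≤ ‖z‖ := by simpa using hz.2
      exact (hdiff z h2 h1).continuousAt.continuousWithinAt
    · intro z hz
      have h1 : ‖z‖ < b := by simpa using hz.1.1
      have h2 : a < ‖z‖ := by simpa using hz.1.2
      exact hdiff z h2.le h1.le
  have hQd : DifferentiableOn ℂ Q (ball 0 b) := by
    have hps := hasFPowerSeriesOn_cauchy_integral (R := b.toNNReal) (f := resolvent S) (c := 0)
      (by rwa [Real.coe_toNNReal b hb.le]) (Real.toNNReal_pos.2 hb)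
    have := hps.differentiableOn
    rw [Metric.eball_coe, Real.coe_toNNReal b hb.le] at this
    exact this
  have hE : P * (1 - P) = 0 := by
    nth_rewrite 1 [hPa]
    rw [smul_mul_assoc, aux_circle_mul_const hia]
    have : (∮ z in C(0, a), resolvent S z * (1 - P)) = ∮ z in C(0, a), Q z := by
      refine circleIntegral.integral_congr ha.le fun z hz => ?_
      have hz' : ‖z‖ = a := by simpa using hz
      rw [← key1 z (by linarith), ← mul_assoc, hmul' z hz'.ge (by linarith), one_mul]
    rw [this, Complex.circleIntegral_eq_zero_of_differentiable_on_off_countable ha.le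
      (s := ∅) countable_empty, smul_zero]
    · exact hQd.continuousOn.mono (closedBall_subset_ball hab)
    · intro z hz
      exact hQd.differentiableAt (isOpen_ball.mem_nhds (ball_subset_ball hab.le hz.1))
  refine ⟨P, ?_, hPS, ?_, ?_⟩
  · rw [mul_sub, mul_one, sub_eq_zero] at hE
    exact hE.symm
  · intro w hw
    exact ⟨Q w, hQc w hw.ne, hPc _ (hQc w hw.ne), key1 w hw⟩
  · intro w hw
    exact ⟨-Q w, (hQc w hw.ne').neg_left, (hPc _ (hQc w hw.ne')).neg_left, key2 w hw⟩

end RieszAux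

section GzAux

lemma aux_mem_accSet {A : Set ℂ} {w : ℂ} :
    w ∈ accSet A ↔ ∀ ε > 0, ∃ y ∈ A, y ≠ w ∧ dist y w < ε := by
  unfold accSet
  rw [mem_ofPred_eq, accPt_iff_frequently, Metric.nhds_basis_ball.frequently_iff]
  constructor
  · intro h ε hε
    obtain ⟨y, hy, h1, h2⟩ := h ε hε
    exact ⟨y, h2, h1, hy⟩
  · intro h ε hε
    obtain ⟨y, h2, h1, hy⟩ := h ε hε
    exact ⟨y, hy, h1, h2⟩

lemma aux_accSet_translate (A : Set ℂ) (z : ℂ) :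
    accSet {y | y + z ∈ A} = {y | y + z ∈ accSet A} := by
  ext w
  simp only [mem_ofPred_eq, aux_mem_accSet]
  constructor
  · intro h ε hε
    obtain ⟨y, h1, h2, h3⟩ := h ε hε
    exact ⟨y + z, h1, fun h => h2 (add_right_cancel h), by simpa using h3⟩
  · intro h ε hε
    obtain ⟨y, h1, h2, h3⟩ := h ε hε
    refine ⟨y - z, by simpa using h1, fun h => h2 (by rw [← h]; ring), ?_⟩
    rw [dist_eq_norm] at h3 ⊢
    rwa [show y - z - w = y - (w + z) by ring]

lemma aux_restrict_apply (S : X →L[ℂ] X) (M : Submodule ℂ X) (h : ∀ x ∈ M, S x ∈ M) (x : M) :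
    (restrictCLM S M x : X) = S x := by
  unfold restrictCLM
  rw [dif_pos h]
  rfl

lemma aux_notMem_spectrum (S : X →L[ℂ] X) (w : ℂ) :
    w ∉ spectrum ℂ S ↔ (∀ x, w • x - S x = 0 → x = 0) ∧ ∀ y, ∃ x, w • x - S x = y := by
  rw [spectrum.notMem_iff, ContinuousLinearMap.isUnit_iff_bijective, Function.Bijective,
    injective_iff_map_eq_zero]
  simp [Function.Surjective, Algebra.algebraMap_eq_smul_one]

lemma aux_notMem_spectrum_restrict (S : X →L[ℂ] X) (M : Submodule ℂ X) (hM : IsClosed (M : Set X))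
    (h : ∀ x ∈ M, S x ∈ M) (w : ℂ) :
    w ∉ spectrum ℂ (restrictCLM S M) ↔
      (∀ x ∈ M, w • x - S x = 0 → x = 0) ∧ ∀ y ∈ M, ∃ x ∈ M, w • x - S x = y := by
  have : CompleteSpace M := hM.completeSpace_coe
  rw [aux_notMem_spectrum]
  have e : ∀ x y : M, w • x - restrictCLM S M x = y ↔ w • (x : X) - S x = y := by
    intro x y
    rw [Subtype.ext_iff]
    simp [aux_restrict_apply S M h]
  simp only [e]
  simp

lemma aux_spectrum_red (S : X →L[ℂ] X) (M N : Submodule ℂ X) (hR : Red S M N) (w : ℂ) :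
    w ∈ spectrum ℂ S ↔ w ∈ spectrum ℂ (restrictCLM S M) ∨ w ∈ spectrum ℂ (restrictCLM S N) := by
  obtain ⟨hM, hN, iM, iN, hc⟩ := hR
  rw [← not_iff_not, not_or, aux_notMem_spectrum, aux_notMem_spectrum_restrict S M hM iM,
    aux_notMem_spectrum_restrict S N hN iN]
  have hdec : ∀ x : X, ∃ m ∈ M, ∃ n ∈ N, m + n = x := fun x =>
    Submodule.mem_sup.1 (hc.sup_eq_top ▸ Submodule.mem_top)
  have huniq : ∀ m ∈ M, ∀ n ∈ N, m + n = 0 → m = 0 ∧ n = 0 := by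
    intro m hm n hn h
    have h1 : m = -n := eq_neg_of_add_eq_zero_left h
    have h2 : m = 0 := (Submodule.disjoint_def.1 hc.disjoint) m hm (h1 ▸ N.neg_mem hn)
    refine ⟨h2, ?_⟩
    simpa [h2] using h
  have bM : ∀ x ∈ M, w • x - S x ∈ M := fun x hx => M.sub_mem (M.smul_mem w hx) (iM x hx)
  have bN : ∀ x ∈ N, w • x - S x ∈ N := fun x hx => N.sub_mem (N.smul_mem w hx) (iN x hx)
  have bad : ∀ m n : X, w • (m + n) - S (m + n) = (w • m - S m) + (w • n - S n) := by
    intro m n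
    rw [smul_add, map_add]
    abel
  constructor
  · rintro ⟨h1, h2⟩
    refine ⟨⟨fun x _ => h1 x, ?_⟩, ⟨fun x _ => h1 x, ?_⟩⟩
    · intro y hy
      obtain ⟨x, hx⟩ := h2 y
      obtain ⟨m, hm, n, hn, rfl⟩ := hdec x
      rw [bad] at hx
      have := (huniq (w • m - S m - y) (M.sub_mem (bM m hm) hy) _ (bN n hn)
        (by rw [← hx]; abel)).1
      exact ⟨m, hm, sub_eq_zero.1 this⟩
    · intro y hy
      obtain ⟨x, hx⟩ := h2 y
      obtain ⟨m, hm, n, hn, rfl⟩ := hdec x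
      rw [bad] at hx
      have := (huniq _ (bM m hm) (w • n - S n - y) (N.sub_mem (bN n hn) hy)
        (by rw [← hx]; abel)).2
      exact ⟨n, hn, sub_eq_zero.1 this⟩
  · rintro ⟨⟨h1, h2⟩, ⟨h3, h4⟩⟩
    constructor
    · intro x hx
      obtain ⟨m, hm, n, hn, rfl⟩ := hdec x
      rw [bad] at hx
      obtain ⟨e1, e2⟩ := huniq _ (bM m hm) _ (bN n hn) hx
      rw [h1 m hm e1, h3 n hn e2, add_zero]
    · intro y
      obtain ⟨m, hm, n, hn, rfl⟩ := hdec y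
      obtain ⟨m', _, e1⟩ := h2 m hm
      obtain ⟨n', _, e2⟩ := h4 n hn
      exact ⟨m' + n', by rw [bad, e1, e2]⟩

lemma aux_bijective_iff (S : X →L[ℂ] X) (M : Submodule ℂ X) (hM : IsClosed (M : Set X)) :
    Function.Bijective (restrictCLM S M) ↔ (0 : ℂ) ∉ spectrum ℂ (restrictCLM S M) := by
  have : CompleteSpace M := hM.completeSpace_coe
  rw [spectrum.zero_notMem_iff, ContinuousLinearMap.isUnit_iff_bijective]

lemma aux_acc_union (K K1 K2 : Set ℂ) (hc : IsClosed K1) (h0 : (0 : ℂ) ∉ K1)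
    (hK : ∀ x ∈ K, x ∈ K1 ∨ x ∈ K2) (hz : accSet K2 ⊆ {0}) : (0 : ℂ) ∉ accSet (accSet K) := by
  obtain ⟨ε, hε, hball⟩ := Metric.isOpen_iff.1 hc.isOpen_compl 0 h0
  intro hacc
  obtain ⟨y, hy, hy0, hyε⟩ := aux_mem_accSet.1 hacc ε hε
  refine hy0 (mem_singleton_iff.1 (hz (aux_mem_accSet.2 fun δ hδ => ?_)))
  obtain ⟨x, hx, hxy, hxd⟩ := aux_mem_accSet.1 hy (min δ (ε - dist y 0))
    (lt_min hδ (sub_pos.2 hyε))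
  refine ⟨x, ?_, hxy, hxd.trans_le (min_le_left _ _)⟩
  rcases hK x hx with h1 | h1
  · refine absurd h1 (hball ?_)
    have h2 := hxd.trans_le (min_le_right _ _)
    have h3 := dist_triangle x y 0
    rw [Metric.mem_ball]
    linarith
  · exact h1

lemma aux_closed_spectrum (S : X →L[ℂ] X) : IsClosed (spectrum ℂ S) := spectrum.isClosed S

lemma aux_closed_restrict (S : X →L[ℂ] X) (M : Submodule ℂ X) (hM : IsClosed (M : Set X)) :
    IsClosed (spectrum ℂ (restrictCLM S M)) := by
  have hcomp : CompleteSpace M := hM.completeSpace_coe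
  exact aux_closed_spectrum _

lemma aux_forward' (S : X →L[ℂ] X) (M N : Submodule ℂ X) (hR : Red S M N)
    (hb : Function.Bijective (restrictCLM S M))
    (hz : accSet (spectrum ℂ (restrictCLM S N)) ⊆ {0}) :
    (0 : ℂ) ∉ accSet (accSet (spectrum ℂ S)) := by
  have h0 := (aux_bijective_iff S M hR.1).1 hb
  have hcl := aux_closed_restrict S M hR.1
  have hsub := fun x => (aux_spectrum_red S M N hR x).1
  generalize spectrum ℂ (restrictCLM S M) = K1 at *
  generalize spectrum ℂ (restrictCLM S N) = K2 at *
  exact aux_acc_union _ _ _ hcl h0 hsub hz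

lemma aux_forward (S : X →L[ℂ] X) (h : GzInvertible S) :
    (0 : ℂ) ∉ accSet (accSet (spectrum ℂ S)) := by
  obtain ⟨M, N, hR, hb, hz⟩ := h
  unfold Zeroloid at hz
  exact aux_forward' S M N hR hb hz

lemma aux_notMem_of_inverse (S P Q : X →L[ℂ] X) (hP : P * P = P) (hPS : Commute P S)
    (hQS : Commute Q S) (hQP : Commute Q P) (w : ℂ)
    (h : (algebraMap ℂ (X →L[ℂ] X) w - S) * Q = P)
    (M : Submodule ℂ X) (hM : IsClosed (M : Set X)) (hMP : ∀ x, x ∈ M ↔ P x = x) :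
    w ∉ spectrum ℂ (restrictCLM S M) := by
  have iM : ∀ x ∈ M, S x ∈ M := by
    intro x hx
    rw [hMP] at hx ⊢
    have := congrArg (fun F : X →L[ℂ] X => F x) hPS.eq
    simp only [ContinuousLinearMap.mul_apply] at this
    rw [this, hx]
  rw [aux_notMem_spectrum_restrict S M hM iM]
  have h' : Q * (algebraMap ℂ (X →L[ℂ] X) w - S) = P := by
    rw [← h]
    exact Commute.sub_right (Algebra.commutes w Q).symm hQS
  have a1 : ∀ x, w • Q x - S (Q x) = P x := by
    intro x
    have := congrArg (fun F : X →L[ℂ] X => F x) h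
    simpa [Algebra.algebraMap_eq_smul_one] using this
  have a2 : ∀ x, Q (w • x - S x) = P x := by
    intro x
    have := congrArg (fun F : X →L[ℂ] X => F x) h'
    simpa [Algebra.algebraMap_eq_smul_one] using this
  have a3 : ∀ x, Q (P x) = P (Q x) := fun x =>
    congrArg (fun F : X →L[ℂ] X => F x) hQP.eq
  constructor
  · intro x hx h0
    have := a2 x
    rw [h0, map_zero, (hMP x).1 hx] at this
    exact this.symm
  · intro y hy
    have hy' := (hMP y).1 hy
    refine ⟨Q y, ?_, ?_⟩
    · rw [hMP, ← a3, hy']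
    · rw [a1, hy']

lemma aux_gap (K : Set ℂ) {ε : ℝ} (hε : 0 < ε)
    (h : ∀ y ∈ accSet K, y ≠ 0 → ε ≤ ‖y‖) :
    ∃ a b : ℝ, 0 < a ∧ a < b ∧ b < ε ∧ ∀ z ∈ K, ¬ (a ≤ ‖z‖ ∧ ‖z‖ ≤ b) := by
  set C : Set ℂ := {z | ε / 4 ≤ ‖z‖ ∧ ‖z‖ ≤ ε / 2} with hC
  have hCc : IsCompact C := by
    refine (isCompact_closedBall (0 : ℂ) (ε / 2)).of_isClosed_subset ?_ ?_
    · exact (isClosed_le continuous_const continuous_norm).inter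
        (isClosed_le continuous_norm continuous_const)
    · intro z hz
      simpa using hz.2
  have hfin : (K ∩ C).Finite := by
    by_contra hinf
    obtain ⟨y, hyC, hy⟩ := Set.Infinite.exists_accPt_of_subset_isCompact hinf hCc inter_subset_right
    have hyK : y ∈ accSet K := hy.mono (Filter.principal_mono.2 inter_subset_left)
    have hy0 : y ≠ 0 := by
      rintro rfl
      have := hyC.1
      simp at this
      linarith
    have := h y hyK hy0
    have := hyC.2
    linarith
  set F : Set ℝ := (fun z : ℂ => ‖z‖) '' (K ∩ C)
  have hF : F.Finite := hfin.image _
  have hinf : (Ioo (ε / 4) (ε / 2) \ F).Nonempty :=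
    ((Ioo_infinite (by linarith)).diff hF).nonempty
  obtain ⟨r, hr, hrF⟩ := hinf
  have hopen : IsOpen (Ioo (ε / 4) (ε / 2) \ F) := isOpen_Ioo.sdiff hF.isClosed
  obtain ⟨δ, hδ, hball⟩ := Metric.isOpen_iff.1 hopen r ⟨hr, hrF⟩
  have hb : r + δ / 2 ∈ Ioo (ε / 4) (ε / 2) \ F := hball (by
    rw [Metric.mem_ball, Real.dist_eq, abs_lt]; constructor <;> linarith)
  refine ⟨r, r + δ / 2, by linarith [hr.1], by linarith, by linarith [hb.1.2], ?_⟩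
  rintro z hz ⟨h1, h2⟩
  have : ‖z‖ ∈ Ioo (ε / 4) (ε / 2) \ F := hball (by
    rw [Metric.mem_ball, Real.dist_eq, abs_lt]; constructor <;> linarith)
  exact this.2 ⟨z, ⟨hz, this.1.1.le, this.1.2.le⟩, rfl⟩

lemma aux_backward (S : X →L[ℂ] X) (h : (0 : ℂ) ∉ accSet (accSet (spectrum ℂ S))) :
    GzInvertible S := by
  rw [aux_mem_accSet] at h
  push Not at h
  obtain ⟨ε, hε, hacc⟩ := h
  obtain ⟨a, b, ha, hab, hbε, hgap⟩ := aux_gap (spectrum ℂ S) hε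
    (fun y hy hy0 => by simpa using hacc y hy hy0)
  obtain ⟨P, hPP, hPS, hin, hout⟩ := aux_riesz S ha hab hgap
  have hP1 : ∀ x, P (P x) = P x := fun x => congrArg (fun F : X →L[ℂ] X => F x) hPP
  have hPS1 : ∀ x, P (S x) = S (P x) := fun x => congrArg (fun F : X →L[ℂ] X => F x) hPS.eq
  set M : Submodule ℂ X := LinearMap.ker ((P : X →L[ℂ] X) : X →ₗ[ℂ] X) with hMdef
  set N : Submodule ℂ X := LinearMap.ker ((1 - P : X →L[ℂ] X) : X →ₗ[ℂ] X) with hNdef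
  have hM : ∀ x, x ∈ M ↔ P x = 0 := fun x => by simp [hMdef]
  have hN : ∀ x, x ∈ N ↔ P x = x := fun x => by
    have : x ∈ N ↔ x - P x = 0 := by simp [hNdef]
    rw [this, sub_eq_zero, eq_comm]
  have cM : IsClosed (M : Set X) := ContinuousLinearMap.isClosed_ker P
  have cN : IsClosed (N : Set X) := ContinuousLinearMap.isClosed_ker (1 - P)
  have hR : Red S M N := by
    refine ⟨cM, cN, ?_, ?_, ?_⟩
    · intro x hx
      rw [hM] at hx ⊢
      rw [hPS1, hx, map_zero]
    · intro x hx
      rw [hN] at hx ⊢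
      rw [hPS1, hx]
    · constructor
      · rw [Submodule.disjoint_def]
        intro x h1 h2
        rw [← (hN x).1 h2, (hM x).1 h1]
      · rw [codisjoint_iff, eq_top_iff]
        intro x _
        refine Submodule.mem_sup.2 ⟨x - P x, ?_, P x, ?_, by abel⟩
        · rw [hM, map_sub, hP1, sub_self]
        · rw [hN, hP1]
  refine ⟨M, N, hR, ?_, ?_⟩
  · rw [aux_bijective_iff S M cM]
    obtain ⟨Q, hQS, hQP, hQ⟩ := hin 0 (by simpa using ha.trans hab)
    refine aux_notMem_of_inverse S (1 - P) Q ?_ ((Commute.one_left S).sub_left hPS) hQS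
      ((Commute.one_right Q).sub_right hQP) 0 hQ M cM ?_
    · rw [mul_sub, sub_mul, sub_mul, hPP]
      simp
    · intro x
      rw [hM]
      simp
  · intro y hy
    have hsub : ∀ x ∈ spectrum ℂ (restrictCLM S N), x ∈ spectrum ℂ S ∧ ‖x‖ ≤ b := by
      intro x hx
      refine ⟨(aux_spectrum_red S M N hR x).2 (Or.inr hx), ?_⟩
      by_contra hlt
      obtain ⟨Q, hQS, hQP, hQ⟩ := hout x (not_le.1 hlt)
      exact aux_notMem_of_inverse S P Q hPP hPS hQS hQP x hQ N cN hN hx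
    by_contra hy0
    rw [mem_singleton_iff] at hy0
    rw [aux_mem_accSet] at hy
    have h1 : y ∈ accSet (spectrum ℂ S) := by
      rw [aux_mem_accSet]
      intro δ hδ
      obtain ⟨x, hx, h2⟩ := hy δ hδ
      exact ⟨x, (hsub x hx).1, h2⟩
    have h2 : ε ≤ ‖y‖ := by simpa using hacc y h1 hy0
    obtain ⟨x, hx, _, h3⟩ := hy (ε - b) (by linarith)
    have h4 := (hsub x hx).2
    rw [dist_comm, dist_eq_norm] at h3
    have := norm_sub_norm_le y x
    linarith

lemma aux_spectrum_sub (T : X →L[ℂ] X) (z : ℂ) :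
    spectrum ℂ (T - z • 1) = {y | y + z ∈ spectrum ℂ T} := by
  ext y
  simp only [mem_ofPred_eq, spectrum.mem_iff, Algebra.algebraMap_eq_smul_one]
  rw [show y • (1 : X →L[ℂ] X) - (T - z • 1) = (y + z) • 1 - T by rw [add_smul]; abel]

end GzAux

/-- The `g_z`-invertible spectrum of `T` equals `acc (acc σ(T))`. -/
theorem gz_spectrum_eq_acc_acc (T : X →L[ℂ] X) :
    {z : ℂ | ¬ GzInvertible (T - z • 1)} = accSet (accSet (spectrum ℂ T)) := by
  ext z
  have h : (0 : ℂ) ∈ accSet (accSet (spectrum ℂ (T - z • 1))) ↔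
      z ∈ accSet (accSet (spectrum ℂ T)) := by
    rw [aux_spectrum_sub, aux_accSet_translate, aux_accSet_translate]
    simp
  rw [← h, mem_ofPred_eq, not_iff_comm]
  exact ⟨aux_backward _, aux_forward _⟩
end

section
/- Let X be a complex Banach space and T a bounded linear operator on X. Then T is g_z-invertible if and only if there exists a bounded projection P on X (P² = P) commuting with T such that T + P is generalized Drazin invertible and TP is zeroloid. -/
open Filter Set Function

variable {X : Type*} [NormedAddCommGroup X] [NormedSpace ℂ X] [CompleteSpace X]

/-- An operator is quasi-nilpotent if its spectrum is contained in `{0}`. -/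
def QuasiNilpotent {Y : Type*} [NormedAddCommGroup Y] [NormedSpace ℂ Y]
    (S : Y →L[ℂ] Y) : Prop :=
  spectrum ℂ S ⊆ {0}

/-- `S` is generalized Drazin invertible. -/
def GenDrazinInvertible (S : X →L[ℂ] X) : Prop :=
  ∃ M N : Submodule ℂ X, Red S M N ∧ Function.Bijective (restrictCLM S M) ∧
    QuasiNilpotent (restrictCLM S N)

section KeyLemma
variable {A : Type*} [NormedRing A] [NormedAlgebra ℂ A] [CompleteSpace A]

/-- (unnormalised) moments of the resolvent -/
noncomputable def resMom (a : A) (r : ℝ) (k : ℤ) : A :=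
  (2 * Real.pi * Complex.I : ℂ)⁻¹ • ∮ z in C(0, r), z ^ k • resolvent a z

lemma clm_circleIntegral (L : A →L[ℂ] A) {f : ℂ → A} {r : ℝ} (hf : CircleIntegrable f 0 r) :
    L (∮ z in C(0, r), f z) = ∮ z in C(0, r), L (f z) := by
  unfold circleIntegral
  rw [← ContinuousLinearMap.intervalIntegral_comp_comm L hf.out]
  simp

variable {a : A} {ρ : ℝ} (hρ : ∀ z : ℂ, z ≠ 0 → ‖z‖ < ρ → z ∈ resolventSet ℂ a)
include hρ

lemma resMom_differentiableAt (k : ℤ) {z : ℂ} (hz : z ≠ 0) (hz' : ‖z‖ < ρ) :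
    DifferentiableAt ℂ (fun z => z ^ k • resolvent a z) z :=
  (differentiableAt_zpow.2 (Or.inl hz)).smul
    (spectrum.hasDerivAt_resolvent_const_left (hρ z hz hz')).differentiableAt

lemma resMom_continuousOn (k : ℤ) {r : ℝ} (h0 : 0 < r) (hr : r < ρ) :
    ContinuousOn (fun z => z ^ k • resolvent a z) (Metric.sphere (0 : ℂ) r) := by
  intro z hz
  have h : ‖z‖ = r := by simpa using hz
  exact (resMom_differentiableAt hρ k (norm_pos_iff.1 (h ▸ h0)) (h ▸ hr)).continuousAt.continuousWithinAt

lemma resMom_integrable (k : ℤ) {r : ℝ} (h0 : 0 < r) (hr : r < ρ) :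
    CircleIntegrable (fun z => z ^ k • resolvent a z) 0 r :=
  (resMom_continuousOn hρ k h0 hr).circleIntegrable h0.le

lemma resMom_indep_aux (k : ℤ) {r s : ℝ} (h0 : 0 < r) (hrs : r ≤ s) (hs : s < ρ) :
    resMom a s k = resMom a r k := by
  unfold resMom
  congr 1
  have key := Complex.circleIntegral_sub_center_inv_smul_eq_of_differentiable_on_annulus_off_countable
    (c := 0) h0 hrs (f := fun z => z ^ (k + 1) • resolvent a z) (s := ∅) (by simp)
    (by
      intro z hz
      have h1 : ‖z‖ ≤ s := by simpa using hz.1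
      have h2 : r ≤ ‖z‖ := by simpa using hz.2
      exact (resMom_differentiableAt hρ (k+1) (norm_pos_iff.1 (by linarith))
        (by linarith)).continuousAt.continuousWithinAt)
    (by
      intro z hz
      have h1 : ‖z‖ < s := by simpa using hz.1.1
      have h2 : r < ‖z‖ := by simpa using hz.1.2
      exact (resMom_differentiableAt hρ (k+1) (norm_pos_iff.1 (by linarith)) (by linarith)))
  have conv : ∀ t : ℝ, 0 < t → (∮ z in C(0, t), (z - 0)⁻¹ • (z ^ (k + 1) • resolvent a z))
      = ∮ z in C(0, t), z ^ k • resolvent a z := by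
    intro t ht
    refine circleIntegral.integral_congr ht.le ?_
    intro z hz
    have h : ‖z‖ = t := by simpa using hz
    have hz0 : z ≠ 0 := norm_pos_iff.1 (h ▸ ht)
    simp only [sub_zero, smul_smul]
    rw [zpow_add_one₀ hz0, mul_comm, mul_assoc, mul_inv_cancel₀ hz0, mul_one]
  rw [conv s (by linarith), conv r h0] at key
  exact key

lemma resMom_indep (k : ℤ) {r s : ℝ} (h0 : 0 < r) (hr : r < ρ) (h0s : 0 < s) (hs : s < ρ) :
    resMom a s k = resMom a r k := by
  rcases le_total r s with h | h
  · exact resMom_indep_aux hρ k h0 h hs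
  · exact (resMom_indep_aux hρ k h0s h hr).symm

lemma resMom_bound {r : ℝ} (h0 : 0 < r) (hr : r < ρ) :
    ∃ C : ℝ, 0 ≤ C ∧ ∀ k : ℤ, ‖resMom a r k‖ ≤ C * r ^ k := by
  obtain ⟨C, hC⟩ := (isCompact_sphere (0 : ℂ) r).exists_bound_of_continuousOn
    (resMom_continuousOn hρ 0 h0 hr)
  refine ⟨r * max C 0, by positivity, fun k => ?_⟩
  have := circleIntegral.norm_two_pi_i_inv_smul_integral_le_of_norm_le_const (c := 0)
    (f := fun z => z ^ k • resolvent a z) (C := r ^ k * max C 0) h0.le (by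
      intro z hz
      have h := hC z hz
      have hz' : ‖z‖ = r := by simpa using hz
      simp only [zpow_zero, one_smul] at h
      rw [norm_smul, norm_zpow, hz']
      gcongr
      exact h.trans (le_max_left _ _))
  unfold resMom
  refine this.trans (le_of_eq (by ring))

lemma resMom_mul (k : ℤ) {r : ℝ} (h0 : 0 < r) (hr : r < ρ) :
    a * resMom a r k = resMom a r (k + 1) - if k = -1 then 1 else 0 := by
  have h1 : a * (∮ z in C(0, r), z ^ k • resolvent a z) =
      (∮ z in C(0, r), z ^ (k+1) • resolvent a z) - ∮ z in C(0, r), z ^ k • (1 : A) := by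
    rw [← circleIntegral.integral_sub (resMom_integrable hρ _ h0 hr)]
    · have := clm_circleIntegral (ContinuousLinearMap.mul ℂ A a) (resMom_integrable hρ k h0 hr)
      simp only [ContinuousLinearMap.mul_apply'] at this
      rw [this]
      refine circleIntegral.integral_congr h0.le ?_
      intro z hz
      have h : ‖z‖ = r := by simpa using hz
      have hz0 : z ≠ 0 := norm_pos_iff.1 (h ▸ h0)
      have hu : (algebraMap ℂ A z - a) * resolvent a z = 1 := by
        rw [resolvent]
        exact Ring.mul_inverse_cancel _ (hρ z hz0 (h ▸ hr))
      have hu' : a * resolvent a z = z • resolvent a z - 1 := by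
        rw [← hu, sub_mul, Algebra.smul_def]; abel
      simp only [mul_smul_comm, hu', smul_sub, smul_smul, zpow_add_one₀ hz0]
    · apply ContinuousOn.circleIntegrable h0.le
      intro z hz
      have h : ‖z‖ = r := by simpa using hz
      have hz0 : z ≠ 0 := norm_pos_iff.1 (h ▸ h0)
      exact ((differentiableAt_zpow.2 (Or.inl hz0)).smul_const (1 : A)).continuousAt.continuousWithinAt
  unfold resMom
  rw [mul_smul_comm, h1, smul_sub]
  congr 1
  rw [circleIntegral.integral_smul_const]
  split_ifs with hk
  · subst hk
    have := circleIntegral.integral_sub_center_inv 0 h0.ne'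
    simp only [sub_zero] at this
    simp only [zpow_neg_one, this, smul_smul]
    rw [inv_mul_cancel₀ Complex.two_pi_I_ne_zero, one_smul]
  · have := circleIntegral.integral_sub_zpow_of_ne hk 0 0 r
    simp only [sub_zero] at this
    simp [this]

lemma resMom_comm (k : ℤ) {r : ℝ} (h0 : 0 < r) (hr : r < ρ) {x : A} (hx : Commute x a) :
    Commute x (resMom a r k) := by
  unfold resMom
  apply Commute.smul_right
  have h1 := clm_circleIntegral (ContinuousLinearMap.mul ℂ A x) (resMom_integrable hρ k h0 hr)
  have h2 := clm_circleIntegral ((ContinuousLinearMap.mul ℂ A).flip x) (resMom_integrable hρ k h0 hr)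
  simp only [ContinuousLinearMap.mul_apply', ContinuousLinearMap.flip_apply] at h1 h2
  rw [Commute, SemiconjBy, h1, h2]
  congr 1
  funext z
  rw [mul_smul_comm, smul_mul_assoc]
  congr 1
  rw [resolvent]
  have hxz : Commute x (algebraMap ℂ A z - a) :=
    (Algebra.commute_algebraMap_right z x).sub_right hx
  by_cases hu : IsUnit (algebraMap ℂ A z - a)
  · obtain ⟨u, hu⟩ := hu
    rw [← hu] at hxz ⊢
    rw [Ring.inverse_unit]
    exact hxz.units_inv_right.eq
  · rw [Ring.inverse_non_unit _ hu, mul_zero, zero_mul]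

end KeyLemma

theorem key_lemma {A : Type*} [NormedRing A] [NormedAlgebra ℂ A] [CompleteSpace A] (a : A)
    (h : ∀ᶠ z in nhdsWithin (0 : ℂ) {0}ᶜ, z ∉ spectrum ℂ a) :
    ∃ q : A, q * q = q ∧ (∀ x, Commute x a → Commute x q) ∧ spectrum ℂ (a * q) ⊆ {0} ∧
      IsUnit (a * (1 - q) + q) := by
  obtain ⟨ρ, hρ0, hρ'⟩ := Metric.mem_nhdsWithin_iff.1 h
  have hρ : ∀ z : ℂ, z ≠ 0 → ‖z‖ < ρ → z ∈ resolventSet ℂ a := by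
    intro z hz hz'
    have : z ∉ spectrum ℂ a := hρ' ⟨by simpa using hz', hz⟩
    simpa [spectrum] using this
  clear h hρ'
  set s : ℝ := ρ / 2 with hs
  have s0 : 0 < s := by positivity
  have sρ : s < ρ := by linarith
  set c : ℤ → A := resMom a s with hc
  have cmul : ∀ k, a * c k = c (k + 1) - if k = -1 then 1 else 0 := fun k => resMom_mul hρ k s0 sρ
  have ccomm : ∀ k x, Commute x a → Commute x (c k) := fun k x hx => resMom_comm hρ k s0 sρ hx
  have cac : ∀ k, Commute a (c k) := fun k => ccomm k a (Commute.refl a)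
  have cbd : ∀ r : ℝ, 0 < r → r < ρ → ∃ C : ℝ, 0 ≤ C ∧ ∀ k : ℤ, ‖c k‖ ≤ C * r ^ k := by
    intro r r0 rρ
    obtain ⟨C, hC, hb⟩ := resMom_bound hρ r0 rρ
    refine ⟨C, hC, fun k => ?_⟩
    rw [hc, resMom_indep hρ k r0 rρ s0 sρ]
    exact hb k
  have c0 : a * c (-1) = c 0 - 1 := by simpa using cmul (-1)
  have shift : ∀ n : ℕ, c n * c (-n - 1) = c 0 * c (-1) := by
    intro n
    induction n with
    | zero => simp
    | succ n ih =>
      rw [← ih]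
      have e1 : a * c n = c (n + 1) := by
        rw [cmul, if_neg (by omega), sub_zero]
      have e2 : a * c (-(n + 1 : ℕ) - 1) = c (-n - 1) := by
        rw [cmul, if_neg (by push_cast; omega), sub_zero]
        congr 1; push_cast; ring
      push_cast at e2 ⊢
      rw [← e1, ← e2, (cac n).eq, mul_assoc]
  have hz : c 0 * c (-1) = 0 := by
    obtain ⟨C, hC, hb⟩ := cbd (s / 2) (by positivity) (by linarith)
    obtain ⟨D, hD, hd⟩ := cbd s s0 sρ
    have lim : Tendsto (fun n : ℕ => C * D * s⁻¹ * (1/2 : ℝ) ^ n) atTop (nhds 0) := by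
      simpa using (tendsto_pow_atTop_nhds_zero_of_lt_one (r := (1/2 : ℝ)) (by norm_num) (by norm_num)).const_mul (C * D * s⁻¹)
    have : ‖c 0 * c (-1)‖ ≤ 0 := by
      refine ge_of_tendsto' lim fun n => ?_
      rw [← shift n]
      calc _ ≤ ‖c n‖ * ‖c (-n - 1)‖ := norm_mul_le _ _
        _ ≤ (C * (s/2) ^ (n : ℤ)) * (D * s ^ (-n - 1 : ℤ)) := by
          gcongr
          · exact hb _
          · exact hd _
        _ = _ := by
          rw [zpow_sub_one₀ s0.ne', zpow_neg, zpow_natCast, zpow_natCast, div_pow s 2, div_pow 1 2, one_pow]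
          field_simp
    exact norm_le_zero_iff.1 this
  have idem : c 0 * c 0 = c 0 := by
    have : c 0 * (c 0 - 1) = 0 := by
      rw [← c0, ← mul_assoc, ← (cac 0).eq, mul_assoc, hz, mul_zero]
    rw [mul_sub, mul_one, sub_eq_zero] at this
    exact this
  have hpow : ∀ n : ℕ, (a * c 0) ^ (n + 1) = c (n + 1) := by
    intro n
    rw [(cac 0).mul_pow]
    have i2 : ∀ n : ℕ, c 0 ^ (n + 1) = c 0 := by
      intro n
      induction n with
      | zero => simp
      | succ n ih => rw [pow_succ, ih, idem]
    have i3 : ∀ n : ℕ, a ^ n * c 0 = c n := by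
      intro n
      induction n with
      | zero => simp
      | succ n ih =>
        rw [pow_succ', mul_assoc, ih, cmul, if_neg (by omega), sub_zero]
        simp
    rw [i2, i3]
    simp
  refine ⟨c 0, idem, fun x hx => ccomm 0 x hx, ?_, ?_⟩
  · intro l hl
    by_contra hl0
    have hl0 : 0 < ‖l‖ := norm_pos_iff.2 hl0
    set r := min s (‖l‖ / 2) with hr
    have r0 : 0 < r := by positivity
    obtain ⟨C, hC, hb⟩ := cbd r r0 ((min_le_left _ _).trans_lt sρ)
    have lim : Tendsto (fun n : ℕ => C * ‖(1 : A)‖ * (r / ‖l‖) ^ (n + 1)) atTop (nhds 0) := by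
      have : r / ‖l‖ < 1 := by
        rw [div_lt_one hl0]
        exact (min_le_right _ _).trans_lt (by linarith)
      simpa using ((tendsto_add_atTop_iff_nat 1).2
        (tendsto_pow_atTop_nhds_zero_of_lt_one (by positivity) this)).const_mul (C * ‖(1 : A)‖)
    have : (1 : ℝ) ≤ 0 := by
      refine ge_of_tendsto' lim fun n => ?_
      have h1 : l ^ (n + 1) ∈ spectrum ℂ ((a * c 0) ^ (n + 1)) :=
        spectrum.pow_mem_pow _ _ hl
      have h2 := spectrum.norm_le_norm_mul_of_mem h1
      rw [hpow, norm_pow] at h2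
      have h3 := hb (n + 1)
      rw [div_pow, mul_div_assoc', le_div_iff₀ (by positivity), one_mul]
      refine h2.trans ?_
      calc _ ≤ C * r ^ (n + 1 : ℤ) * ‖(1 : A)‖ := by gcongr
        _ = _ := by
          rw [← zpow_natCast]; push_cast; ring
    linarith
  · have ab : a * (1 - c 0) + c 0 = a * (1 - c 0) + c 0 := rfl
    have qb : c (-1) * c 0 = 0 := by
      rw [((ccomm 0 _ (cac (-1)).symm).eq), hz]
    have ca : c (-1) * a = c 0 - 1 := by rw [← (cac (-1)).eq, c0]
    have qa : c 0 * a = a * c 0 := (cac 0).eq.symm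
    refine ⟨⟨a * (1 - c 0) + c 0, - c (-1) + c 0, ?_, ?_⟩, rfl⟩
    · have : (a * (1 - c 0) + c 0) * (-c (-1) + c 0) =
        -(a * c (-1)) + a * (c 0 * c (-1)) + a * c 0 - a * (c 0 * c 0) - c 0 * c (-1) + c 0 * c 0 := by
        noncomm_ring
      rw [this, c0, hz, idem]; noncomm_ring
    · have : (-c (-1) + c 0) * (a * (1 - c 0) + c 0) =
        -(c (-1) * a) + (c (-1) * a) * c 0 + c 0 * a - c 0 * a * c 0 - c (-1) * c 0 + c 0 * c 0 := by
        noncomm_ring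
      rw [this, ca, qb, qa, mul_assoc, sub_mul, idem]; noncomm_ring

section Alg
variable {A : Type*} [Ring A] [Algebra ℂ A]

lemma isUnit_glue {q u v : A} (hq : q * q = q) (huq : Commute u q) (hvq : Commute v q)
    (hu : IsUnit u) (hv : IsUnit v) : IsUnit (u * (1 - q) + v * q) := by
  obtain ⟨u, rfl⟩ := hu
  obtain ⟨v, rfl⟩ := hv
  have hu' : (↑u⁻¹ : A) * q = q * ↑u⁻¹ := (huq.units_inv_left).eq
  have hv' : (↑v⁻¹ : A) * q = q * ↑v⁻¹ := (hvq.units_inv_left).eq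
  have e0 : q * (1 - q) = 0 := by rw [mul_sub, hq]; simp
  have e1 : (1 - q) * q = 0 := by rw [sub_mul, hq]; simp
  have e2 : (1 - q) * (1 - q) = 1 - q := by rw [mul_sub, e1]; simp
  have glue : ∀ x y x' y' : A, Commute x' q → Commute y' q →
      (x * (1 - q) + y * q) * (x' * (1 - q) + y' * q) = x * x' * (1 - q) + y * y' * q := by
    intro x y x' y' hx hy
    have hx1 : (1 - q) * x' = x' * (1 - q) := by rw [sub_mul, mul_sub, hx.eq]; simp
    have hy1 : (1 - q) * y' = y' * (1 - q) := by rw [sub_mul, mul_sub, hy.eq]; simp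
    calc _ = x * ((1 - q) * x') * (1 - q) + x * ((1 - q) * y') * q + y * (q * x') * (1 - q)
        + y * (q * y') * q := by simp only [mul_add, add_mul, mul_assoc]; abel
      _ = x * x' * ((1 - q) * (1 - q)) + x * y' * ((1 - q) * q) + y * x' * (q * (1 - q))
        + y * y' * (q * q) := by
          rw [hx1, hy1, ← hx.eq, ← hy.eq]; simp only [mul_assoc]
      _ = _ := by rw [e0, e1, e2, hq]; simp
  refine ⟨⟨u * (1 - q) + v * q, ↑u⁻¹ * (1 - q) + ↑v⁻¹ * q, ?_, ?_⟩, rfl⟩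
  · rw [glue _ _ _ _ hu' hv']; simp
  · rw [glue _ _ _ _ huq hvq]; simp

lemma spectrum_glue {q s u v : A} (hq : q * q = q) (huq : Commute u q) (hvq : Commute v q)
    (hu : s * (1 - q) = u * (1 - q)) (hv : s * q = v * q) {z : ℂ}
    (h1 : z ∉ spectrum ℂ u) (h2 : z ∉ spectrum ℂ v) : z ∉ spectrum ℂ s := by
  rw [spectrum.notMem_iff] at *
  have := isUnit_glue hq ((Algebra.commute_algebraMap_left z q).sub_left huq)
    ((Algebra.commute_algebraMap_left z q).sub_left hvq) h1 h2
  convert this using 1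
  rw [sub_mul, sub_mul, ← hu, ← hv]
  noncomm_ring

end Alg

lemma zeroloid_iff {Y : Type*} [NormedAddCommGroup Y] [NormedSpace ℂ Y] (S : Y →L[ℂ] Y) :
    Zeroloid S ↔ ∀ l : ℂ, l ≠ 0 → ∀ᶠ z in nhdsWithin l {l}ᶜ, z ∉ spectrum ℂ S := by
  unfold Zeroloid accSet
  constructor
  · intro h l hl
    by_contra hc
    exact hl (h (accPt_iff_frequently_nhdsNE.2 hc))
  · intro h l hl
    by_contra hc
    have := accPt_iff_frequently_nhdsNE.1 hl
    exact this (h l hc)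

lemma restrictCLM_apply {T : X →L[ℂ] X} {M : Submodule ℂ X} (h : ∀ x ∈ M, T x ∈ M) (x : M) :
    (restrictCLM T M x : X) = T x := by
  unfold restrictCLM
  rw [dif_pos h]
  rfl

/-- the idempotent `Q` is the projection onto `N` along `M` and both are invariant -/
structure Compat (S Q : X →L[ℂ] X) (M N : Submodule ℂ X) : Prop where
  idem : ∀ x, Q (Q x) = Q x
  comm : ∀ x, S (Q x) = Q (S x)
  memN : ∀ x, x ∈ N ↔ Q x = x
  memM : ∀ x, x ∈ M ↔ Q x = 0
  closedM : IsClosed (M : Set X)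
  closedN : IsClosed (N : Set X)

namespace Compat
variable {S Q : X →L[ℂ] X} {M N : Submodule ℂ X}

lemma invN (h : Compat S Q M N) : ∀ x ∈ N, S x ∈ N := by
  intro x hx
  rw [h.memN] at *
  rw [← h.comm, hx]

lemma invM (h : Compat S Q M N) : ∀ x ∈ M, S x ∈ M := by
  intro x hx
  rw [h.memM] at *
  rw [← h.comm, hx, map_zero]

lemma bij_iff (h : Compat S Q M N) :
    Bijective (restrictCLM S M) ↔ IsUnit (S * (1 - Q) + Q) := by
  rw [ContinuousLinearMap.isUnit_iff_bijective]
  have ev : ∀ x, (S * (1 - Q) + Q) x = S (x - Q x) + Q x := fun x => by simp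
  have inM : ∀ x, x - Q x ∈ M := fun x => by rw [h.memM, map_sub, h.idem, sub_self]
  constructor
  · rintro ⟨hi, hs⟩
    constructor
    · rw [injective_iff_map_eq_zero]
      intro x hx
      rw [ev] at hx
      have h1 := congrArg Q hx
      rw [map_add, h.idem, (h.memM _).1 (h.invM _ (inM x)), zero_add, map_zero] at h1
      rw [h1, sub_zero, add_zero] at hx
      have h2 : (⟨x, (h.memM x).2 h1⟩ : M) = 0 := by
        apply (injective_iff_map_eq_zero _).1 hi
        apply Subtype.ext
        rw [restrictCLM_apply h.invM]
        exact hx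
      exact congrArg Subtype.val h2
    · intro y
      obtain ⟨m, hm⟩ := hs ⟨y - Q y, inM y⟩
      have hm' := congrArg Subtype.val hm
      rw [restrictCLM_apply h.invM] at hm'
      refine ⟨m + Q y, ?_⟩
      rw [ev, map_add, (h.memM _).1 m.2, h.idem, zero_add, add_sub_cancel_right, hm']
      simp
  · rintro ⟨hi, hs⟩
    constructor
    · rw [injective_iff_map_eq_zero]
      intro x hx
      have hx' := congrArg Subtype.val hx
      rw [restrictCLM_apply h.invM] at hx'
      apply Subtype.ext
      apply (injective_iff_map_eq_zero _).1 hi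
      rw [ev, (h.memM _).1 x.2, sub_zero, add_zero]
      exact hx'
    · intro y
      obtain ⟨x, hx⟩ := hs y
      rw [ev] at hx
      have h1 := congrArg Q hx
      rw [map_add, h.idem, (h.memM _).1 (h.invM _ (inM x)), zero_add, (h.memM _).1 y.2] at h1
      refine ⟨⟨x, (h.memM x).2 h1⟩, ?_⟩
      apply Subtype.ext
      rw [restrictCLM_apply h.invM]
      rw [h1, sub_zero, add_zero] at hx
      exact hx

lemma spec_iff (h : Compat S Q M N) {l : ℂ} (hl : l ≠ 0) :
    l ∉ spectrum ℂ (restrictCLM S N) ↔ l ∉ spectrum ℂ (S * Q) := by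
  haveI : CompleteSpace N := h.closedN.completeSpace_coe
  rw [spectrum.notMem_iff, spectrum.notMem_iff, ContinuousLinearMap.isUnit_iff_bijective,
    ContinuousLinearMap.isUnit_iff_bijective]
  have ev : ∀ x, (algebraMap ℂ (X →L[ℂ] X) l - S * Q) x = l • x - S (Q x) := fun x => by
    simp [Algebra.algebraMap_eq_smul_one]
  have ev' : ∀ x : N, ((algebraMap ℂ (N →L[ℂ] N) l - restrictCLM S N) x : X) = l • (x : X) - S x := by
    intro x
    simp [Algebra.algebraMap_eq_smul_one, restrictCLM_apply h.invN]
  have inN : ∀ x, Q x ∈ N := fun x => (h.memN _).2 (h.idem x)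
  have back : ∀ x, l • x - S (Q x) ∈ N → x ∈ N := by
    intro x hx
    have : l • x ∈ N := by
      have := N.add_mem hx (h.invN _ (inN x))
      simpa using this
    have := N.smul_mem l⁻¹ this
    rwa [smul_smul, inv_mul_cancel₀ hl, one_smul] at this
  constructor
  · rintro ⟨hi, hs⟩
    constructor
    · rw [injective_iff_map_eq_zero]
      intro x hx
      rw [ev] at hx
      have hN := back x (hx ▸ N.zero_mem)
      rw [(h.memN x).1 hN] at hx
      have h2 : (⟨x, hN⟩ : N) = 0 := by
        apply (injective_iff_map_eq_zero _).1 hi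
        apply Subtype.ext
        rw [ev']
        exact hx
      exact congrArg Subtype.val h2
    · intro y
      obtain ⟨n, hn⟩ := hs ⟨Q y, inN y⟩
      have hn' := congrArg Subtype.val hn
      rw [ev'] at hn'
      refine ⟨n + l⁻¹ • (y - Q y), ?_⟩
      rw [ev, map_add, map_smul, map_sub, h.idem, sub_self, smul_zero, add_zero,
        (h.memN _).1 n.2, smul_add, smul_smul, mul_inv_cancel₀ hl, one_smul, add_sub_right_comm, hn']
      simp
  · rintro ⟨hi, hs⟩
    constructor
    · rw [injective_iff_map_eq_zero]
      intro x hx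
      have hx' := congrArg Subtype.val hx
      rw [ev'] at hx'
      apply Subtype.ext
      apply (injective_iff_map_eq_zero _).1 hi
      rw [ev, (h.memN _).1 x.2]
      exact hx'
    · intro y
      obtain ⟨x, hx⟩ := hs y
      rw [ev] at hx
      have hN := back x (hx ▸ y.2)
      refine ⟨⟨x, hN⟩, ?_⟩
      apply Subtype.ext
      rw [ev']
      rw [(h.memN _).1 hN] at hx
      exact hx

lemma quasi_iff (h : Compat S Q M N) :
    QuasiNilpotent (restrictCLM S N) ↔ spectrum ℂ (S * Q) ⊆ {0} := by
  unfold QuasiNilpotent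
  constructor
  · intro hh l hl
    by_contra hl0
    exact (h.spec_iff hl0).1 (fun h' => hl0 (hh h')) hl
  · intro hh l hl
    by_contra hl0
    exact (h.spec_iff hl0).2 (fun h' => hl0 (hh h')) hl

lemma zero_iff (h : Compat S Q M N) : Zeroloid (restrictCLM S N) ↔ Zeroloid (S * Q) := by
  rw [zeroloid_iff, zeroloid_iff]
  have ne : ∀ l : ℂ, l ≠ 0 → ∀ᶠ z in nhdsWithin l {l}ᶜ, z ≠ 0 := fun l hl =>
    nhdsWithin_le_nhds (isOpen_ne.mem_nhds hl)
  constructor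
  · intro hh l hl
    filter_upwards [hh l hl, ne l hl] with z hz hz0 using (h.spec_iff hz0).1 hz
  · intro hh l hl
    filter_upwards [hh l hl, ne l hl] with z hz hz0 using (h.spec_iff hz0).2 hz

end Compat

lemma exists_compat {S : X →L[ℂ] X} {M N : Submodule ℂ X} (h : Red S M N) :
    ∃ Q : X →L[ℂ] X, Compat S Q M N := by
  obtain ⟨hM, hN, iM, iN, hc⟩ := h
  have ht := Submodule.IsCompl.isTopCompl_of_isClosed hc.symm hN hM
  have q1 : ∀ x ∈ N, N.projectionL M ht x = x := fun x hx => by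
    simpa using Submodule.projectionL_apply_left ht ⟨x, hx⟩
  have q0 : ∀ x ∈ M, N.projectionL M ht x = 0 := fun x hx => by
    simpa using Submodule.projectionL_apply_right ht ⟨x, hx⟩
  have dec : ∀ x : X, ∃ m ∈ M, ∃ n ∈ N, m + n = x := fun x =>
    Submodule.mem_sup.1 (hc.sup_eq_top ▸ Submodule.mem_top)
  refine ⟨N.projectionL M ht, ?_, ?_, ?_, ?_, hM, hN⟩
  · intro x
    obtain ⟨m, hm, n, hn, rfl⟩ := dec x
    rw [map_add, q1 n hn, q0 m hm, zero_add, q1 n hn]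
  · intro x
    obtain ⟨m, hm, n, hn, rfl⟩ := dec x
    rw [map_add, q1 n hn, q0 m hm, zero_add, map_add, map_add, q1 _ (iN n hn), q0 _ (iM m hm),
      zero_add]
  · intro x
    refine ⟨q1 x, fun hx => ?_⟩
    obtain ⟨m, hm, n, hn, rfl⟩ := dec x
    rw [map_add, q1 n hn, q0 m hm, zero_add] at hx
    rw [← hx]; exact hn
  · intro x
    refine ⟨q0 x, fun hx => ?_⟩
    obtain ⟨m, hm, n, hn, rfl⟩ := dec x
    rw [map_add, q1 n hn, q0 m hm, zero_add] at hx
    rw [hx, add_zero]; exact hm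

lemma red_of_idem {S Q : X →L[ℂ] X} (hq : Q * Q = Q) (hc : Commute S Q) :
    ∃ M N : Submodule ℂ X, Red S M N ∧ Compat S Q M N := by
  have ht := ContinuousLinearMap.IsIdempotentElem.isTopCompl (f := Q) hq
  have hid : ∀ x, Q (Q x) = Q x := fun x => DFunLike.congr_fun hq x
  have comp : Compat S Q (LinearMap.ker (Q : X →ₗ[ℂ] X)) (LinearMap.range (Q : X →ₗ[ℂ] X)) := by
    refine ⟨hid, fun x => DFunLike.congr_fun hc.eq x, ?_, ?_, ht.isClosed', ht.isClosed⟩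
    · intro x
      constructor
      · rintro ⟨y, rfl⟩
        exact hid y
      · intro hx
        exact ⟨x, hx⟩
    · intro x
      rfl
  exact ⟨_, _, ⟨comp.closedM, comp.closedN, comp.invM, comp.invN, ht.isCompl.symm⟩, comp⟩

lemma Compat.mul_self {S Q : X →L[ℂ] X} {M N : Submodule ℂ X} (h : Compat S Q M N) :
    Q * Q = Q := ContinuousLinearMap.ext h.idem

lemma Compat.commute {S Q : X →L[ℂ] X} {M N : Submodule ℂ X} (h : Compat S Q M N) :
    Commute S Q := ContinuousLinearMap.ext h.comm

lemma gz_iff (T : X →L[ℂ] X) : GzInvertible T ↔ ∃ Q : X →L[ℂ] X, Q * Q = Q ∧ Commute T Q ∧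
    IsUnit (T * (1 - Q) + Q) ∧ Zeroloid (T * Q) := by
  constructor
  · rintro ⟨M, N, hr, hb, hz⟩
    obtain ⟨Q, h⟩ := exists_compat hr
    exact ⟨Q, h.mul_self, h.commute, h.bij_iff.1 hb, h.zero_iff.1 hz⟩
  · rintro ⟨Q, hq, hc, hb, hz⟩
    obtain ⟨M, N, hr, h⟩ := red_of_idem hq hc
    exact ⟨M, N, hr, h.bij_iff.2 hb, h.zero_iff.2 hz⟩

lemma gd_iff (T : X →L[ℂ] X) : GenDrazinInvertible T ↔ ∃ Q : X →L[ℂ] X, Q * Q = Q ∧ Commute T Q ∧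
    IsUnit (T * (1 - Q) + Q) ∧ spectrum ℂ (T * Q) ⊆ {0} := by
  constructor
  · rintro ⟨M, N, hr, hb, hz⟩
    obtain ⟨Q, h⟩ := exists_compat hr
    exact ⟨Q, h.mul_self, h.commute, h.bij_iff.1 hb, h.quasi_iff.1 hz⟩
  · rintro ⟨Q, hq, hc, hb, hz⟩
    obtain ⟨M, N, hr, h⟩ := red_of_idem hq hc
    exact ⟨M, N, hr, h.bij_iff.2 hb, h.quasi_iff.2 hz⟩

lemma eventually_of_isUnit {u : X →L[ℂ] X} (hu : IsUnit u) :
    ∀ᶠ z in nhdsWithin (0 : ℂ) {0}ᶜ, z ∉ spectrum ℂ u := by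
  apply nhdsWithin_le_nhds
  exact (spectrum.isClosed u).isOpen_compl.mem_nhds (spectrum.zero_notMem_iff ℂ |>.2 hu)

/-- `T` is `g_z`-invertible iff there is a bounded projection `P` commuting with `T` such that
`T + P` is generalized Drazin invertible and `TP` is zeroloid. -/
theorem gzInvertible_iff_exists_projection (T : X →L[ℂ] X) :
    GzInvertible T ↔ ∃ P : X →L[ℂ] X, P * P = P ∧ T * P = P * T ∧
      GenDrazinInvertible (T + P) ∧ Zeroloid (T * P) := by
  rw [gz_iff]
  constructor
  · rintro ⟨Q, hq, hc, hu, hz⟩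
    refine ⟨Q, hq, hc.eq, ?_, hz⟩
    rw [gd_iff]
    have hcQ : Commute (T * Q) Q := hc.mul_left (Commute.refl Q)
    have hev : ∀ᶠ z in nhdsWithin (0 : ℂ) {0}ᶜ, z ∉ spectrum ℂ (T + Q) := by
      have h1 := eventually_of_isUnit hu
      have h2 : ∀ᶠ z in nhdsWithin (0 : ℂ) {0}ᶜ, z - 1 ∉ spectrum ℂ (T * Q) := by
        have h3 := (zeroloid_iff _).1 hz (-1) (by norm_num)
        have ht : Filter.Tendsto (fun z : ℂ => z - 1) (nhdsWithin (0 : ℂ) {0}ᶜ)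
            (nhdsWithin (-1 : ℂ) {-1}ᶜ) := by
          apply tendsto_nhdsWithin_of_tendsto_nhds_of_eventually_within
          · apply tendsto_nhdsWithin_of_tendsto_nhds
            have : Continuous (fun z : ℂ => z - 1) := by fun_prop
            simpa using this.tendsto 0
          · filter_upwards [self_mem_nhdsWithin] with z hz hz'
            apply hz
            have : z - 1 = -1 := hz'
            have h0 : z = 0 := by linear_combination this
            exact h0
        exact ht.eventually h3
      filter_upwards [h1, h2] with z hz1 hz2
      refine spectrum_glue (q := Q) (u := T * (1 - Q) + Q) (v := T * Q + 1) hq ?_ ?_ ?_ ?_ hz1 ?_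
      · exact (hc.mul_left ((Commute.one_left Q).sub_left (Commute.refl Q))).add_left (Commute.refl Q)
      · exact hcQ.add_left (Commute.one_left Q)
      · simp only [add_mul, mul_sub, sub_mul, mul_one, one_mul, mul_assoc, hq]; abel
      · simp only [add_mul, one_mul, mul_assoc, hq]
      · rw [spectrum.notMem_iff] at hz2 ⊢
        convert hz2 using 1
        rw [map_sub, map_one]; abel
    obtain ⟨R, hR, hRc, hRs, hRu⟩ := key_lemma (T + Q) hev
    exact ⟨R, hR, hRc _ (Commute.refl _), hRu, hRs⟩
  · rintro ⟨P, hp, hc, hd, hz⟩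
    have hc : Commute T P := hc
    obtain ⟨Q₀, hq, hcq, hu, hs⟩ := (gd_iff _).1 hd
    have hev : ∀ᶠ z in nhdsWithin (0 : ℂ) {0}ᶜ, z ∉ spectrum ℂ (T + P) := by
      filter_upwards [eventually_of_isUnit hu, self_mem_nhdsWithin] with z hz1 hz2
      generalize T + P = S at *
      refine spectrum_glue (q := Q₀) (u := S * (1 - Q₀) + Q₀) (v := S * Q₀) hq ?_ ?_ ?_ ?_ hz1
        (fun h => hz2 (hs h))
      · exact (hcq.mul_left ((Commute.one_left _).sub_left (Commute.refl _))).add_left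
          (Commute.refl _)
      · exact hcq.mul_left (Commute.refl _)
      · simp only [add_mul, mul_sub, sub_mul, mul_one, one_mul, mul_assoc, hq]; abel
      · simp only [mul_assoc, hq]
    obtain ⟨Q, hQ, hQc, hQs, hQu⟩ := key_lemma (T + P) hev
    have hPS : Commute P (T + P) := hc.symm.add_right (Commute.refl P)
    have hPQ : Commute P Q := hQc P hPS
    have hTQ : Commute T Q := hQc T ((Commute.refl T).add_right hc)
    have e1 : Q * P = P * Q := hPQ.eq.symm
    have e2 : P * T = T * P := hc.eq.symm
    have e3 : Q * T = T * Q := hTQ.eq.symm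
    have e1' : ∀ x, Q * (P * x) = P * (Q * x) := fun x => by rw [← mul_assoc, e1, mul_assoc]
    have e2' : ∀ x, P * (T * x) = T * (P * x) := fun x => by rw [← mul_assoc, e2, mul_assoc]
    have e3' : ∀ x, Q * (T * x) = T * (Q * x) := fun x => by rw [← mul_assoc, e3, mul_assoc]
    have hp' : ∀ x, P * (P * x) = P * x := fun x => by rw [← mul_assoc, hp]
    have hQ' : ∀ x, Q * (Q * x) = Q * x := fun x => by rw [← mul_assoc, hQ]
    refine ⟨P + Q - P * Q, ?_, ?_, ?_, ?_⟩
    · simp only [add_mul, mul_add, mul_sub, sub_mul, mul_assoc, e1, e1', hp, hp', hQ, hQ']; abel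
    · exact (hc.add_right hTQ).sub_right (hc.mul_right hTQ)
    · have := isUnit_glue (q := P) (u := (T + P) * (1 - Q) + Q) (v := 1) hp ?_
        (Commute.one_left P) hQu isUnit_one
      · convert this using 1
        simp only [add_mul, mul_add, mul_sub, sub_mul, mul_assoc, e1, e1', hp, hp', hQ, hQ',
          mul_one, one_mul]; abel
      · exact (hPS.symm.mul_left ((Commute.one_left _).sub_left hPQ.symm)).add_left hPQ.symm
    · rw [zeroloid_iff] at hz ⊢
      intro l hl
      have hne : ∀ᶠ z in nhdsWithin l {l}ᶜ, z ≠ 0 := nhdsWithin_le_nhds (isOpen_ne.mem_nhds hl)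
      filter_upwards [hz l hl, hne] with z hz1 hz2
      refine spectrum_glue (q := P) (u := (T + P) * Q) (v := T * P) hp ?_ ?_ ?_ ?_
        (fun h => hz2 (hQs h)) hz1
      · exact hPS.symm.mul_left hPQ.symm
      · exact hc.mul_left (Commute.refl P)
      · simp only [add_mul, mul_add, mul_sub, sub_mul, mul_assoc, e1, e1', hp, hp', mul_one]; abel
      · simp only [add_mul, mul_add, mul_sub, sub_mul, mul_assoc, e1, hp, hp']; abel
end

section
/- Let X be a complex Banach space and T a bounded linear operator on X. Then T is g_z-invertible if and only if there exist a bounded projection P on X (P² = P) commuting with T and operators U, V ∈ L(X) such that P = TU = VT and T(I − P) is zeroloid. -/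
open Filter Set Function

variable {X : Type*} [NormedAddCommGroup X] [NormedSpace ℂ X] [CompleteSpace X]

theorem restrictCLM_apply_coe (T : X →L[ℂ] X) (M : Submodule ℂ X) (h : ∀ x ∈ M, T x ∈ M) (x : M) :
    ((restrictCLM T M x : M) : X) = T x := by
  unfold restrictCLM
  rw [dif_pos h]
  rfl

theorem accSet_subset_zero_of_eq {A B : Set ℂ} (h : ∀ z : ℂ, z ≠ 0 → (z ∈ A ↔ z ∈ B))
    (hA : accSet A ⊆ {0}) : accSet B ⊆ {0} := by
  intro z hz
  by_contra hz0
  have hz0' : z ≠ 0 := hz0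
  apply hz0
  apply hA
  have hz' : AccPt z (Filter.principal B) := hz
  show AccPt z (Filter.principal A)
  rw [accPt_iff_frequently] at hz' ⊢
  refine (hz'.and_eventually (isOpen_ne.mem_nhds hz0')).mono ?_
  rintro y ⟨⟨h1, h2⟩, h3⟩
  exact ⟨h1, (h y h3).2 h2⟩

theorem mem_spectrum_iff_restrict (T P : X →L[ℂ] X) (N : Submodule ℂ X)
    (hP : P * P = P) (hTP : T * P = P * T) (hN : ∀ x, x ∈ N ↔ P x = 0) (hc : IsClosed (N : Set X))
    (z : ℂ) (hz : z ≠ 0) :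
    z ∈ spectrum ℂ (T * (1 - P)) ↔ z ∈ spectrum ℂ (restrictCLM T N) := by
  haveI : CompleteSpace N := hc.completeSpace_coe
  have hPP : ∀ x, P (P x) = P x := fun x => DFunLike.congr_fun hP x
  have hTPx : ∀ x, T (P x) = P (T x) := fun x => DFunLike.congr_fun hTP x
  have hinv : ∀ x ∈ N, T x ∈ N := by
    intro x hx
    rw [hN] at hx ⊢
    rw [← hTPx, hx, map_zero]
  rw [spectrum.mem_iff, spectrum.mem_iff, not_iff_not, ContinuousLinearMap.isUnit_iff_bijective,
    ContinuousLinearMap.isUnit_iff_bijective]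
  have hS : ∀ x, (algebraMap ℂ (X →L[ℂ] X) z - T * (1 - P)) x = z • x - (T x - T (P x)) := by
    intro x
    simp [Algebra.algebraMap_eq_smul_one]
  have hR : ∀ x : N, (((algebraMap ℂ (N →L[ℂ] N) z - restrictCLM T N) x : N) : X)
      = z • (x : X) - T x := by
    intro x
    simp [Algebra.algebraMap_eq_smul_one, restrictCLM_apply_coe T N hinv]
  generalize algebraMap ℂ (X →L[ℂ] X) z - T * (1 - P) = S at hS
  generalize algebraMap ℂ (N →L[ℂ] N) z - restrictCLM T N = R at hR
  have hPS : ∀ x, P (S x) = z • P x := by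
    intro x
    rw [hS, map_sub, map_sub, map_smul, hTPx, hPP, sub_self, sub_zero]
  have hSR : ∀ x : N, S (x : X) = R x := by
    intro x
    rw [hS, hR, (hN x).1 x.2, map_zero, sub_zero]
  constructor
  · rintro ⟨hi, hs⟩
    constructor
    · intro a b hab
      apply Subtype.ext
      apply hi
      rw [hSR, hSR, hab]
    · intro n
      obtain ⟨x, hx⟩ := hs n
      have hxN : x ∈ N := by
        rw [hN]
        have h1 := hPS x
        rw [hx, (hN n).1 n.2] at h1
        exact (smul_eq_zero.1 h1.symm).resolve_left hz
      refine ⟨⟨x, hxN⟩, Subtype.ext ?_⟩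
      rw [← hSR, ← hx]
  · rintro ⟨hi, hs⟩
    constructor
    · rw [injective_iff_map_eq_zero]
      intro x hx
      have hxN : x ∈ N := by
        rw [hN]
        have h1 := hPS x
        rw [hx, map_zero] at h1
        exact (smul_eq_zero.1 h1.symm).resolve_left hz
      have h2 : R ⟨x, hxN⟩ = 0 := by
        apply Subtype.ext
        rw [← hSR]
        exact hx
      have h3 := (injective_iff_map_eq_zero R).1 hi _ h2
      exact congrArg Subtype.val h3
    · intro y
      have hyN : y - P y ∈ N := by
        rw [hN, map_sub, hPP, sub_self]
      obtain ⟨n, hn⟩ := hs ⟨y - P y, hyN⟩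
      refine ⟨n + z⁻¹ • P y, ?_⟩
      rw [map_add, hSR, hn, map_smul, hS (P y), hPP, sub_self, sub_zero, smul_smul,
        inv_mul_cancel₀ hz, one_smul]
      simp

theorem zeroloid_iff_restrict (T P : X →L[ℂ] X) (N : Submodule ℂ X)
    (hP : P * P = P) (hTP : T * P = P * T) (hN : ∀ x, x ∈ N ↔ P x = 0)
    (hc : IsClosed (N : Set X)) :
    Zeroloid (T * (1 - P)) ↔ Zeroloid (restrictCLM T N) :=
  ⟨accSet_subset_zero_of_eq (mem_spectrum_iff_restrict T P N hP hTP hN hc),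
    accSet_subset_zero_of_eq fun z hz => (mem_spectrum_iff_restrict T P N hP hTP hN hc z hz).symm⟩

/-- `T` is `g_z`-invertible iff there are a bounded projection `P` commuting with `T` and
operators `U, V` with `P = TU = VT` and `T(I - P)` zeroloid. -/
theorem gzInvertible_iff_exists_projection_factor (T : X →L[ℂ] X) :
    GzInvertible T ↔ ∃ P U V : X →L[ℂ] X, P * P = P ∧ T * P = P * T ∧
      P = T * U ∧ P = V * T ∧ Zeroloid (T * (1 - P)) := by
  constructor
  · rintro ⟨M, N, ⟨hM, hN, hTM, hTN, hMN⟩, hb, hz⟩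
    haveI : CompleteSpace M := hM.completeSpace_coe
    let p : X →L[ℂ] M := M.linearProjOfClosedCompl N hMN hM hN
    have hpM : ∀ x : M, p x = x := fun x => Submodule.projectionOnto_apply_left hMN x
    have hp0 : ∀ x, p x = 0 ↔ x ∈ N := fun x => Submodule.projectionOnto_apply_eq_zero_iff hMN
    obtain ⟨u, hu⟩ := ContinuousLinearMap.isUnit_iff_bijective.2 hb
    let W : M →L[ℂ] M := ↑u⁻¹
    have h1 : ∀ x, restrictCLM T M (W x) = x := by
      intro x
      rw [← hu]
      exact DFunLike.congr_fun u.mul_inv x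
    have h2 : ∀ x, W (restrictCLM T M x) = x := by
      intro x
      rw [← hu]
      exact DFunLike.congr_fun u.inv_mul x
    have hpT : ∀ x, p (T x) = restrictCLM T M (p x) := by
      intro x
      have hx : x - p x ∈ N := by rw [← hp0, map_sub, hpM, sub_self]
      have hx2 := (hp0 _).2 (hTN _ hx)
      rw [map_sub, map_sub, sub_eq_zero, ← restrictCLM_apply_coe T M hTM, hpM] at hx2
      exact hx2
    let P : X →L[ℂ] X := M.subtypeL.comp p
    have hPx : ∀ x, P x = p x := fun x => rfl
    have hPP : P * P = P := by
      ext x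
      show ((p (p x : X) : M) : X) = p x
      rw [hpM]
    have hTP : T * P = P * T := by
      ext x
      show T (p x : X) = p (T x)
      rw [hpT, restrictCLM_apply_coe T M hTM]
    refine ⟨P, M.subtypeL.comp (W.comp p), M.subtypeL.comp (W.comp p), hPP, hTP, ?_, ?_, ?_⟩
    · ext x
      show (p x : X) = T (W (p x) : X)
      rw [← restrictCLM_apply_coe T M hTM, h1]
    · ext x
      show (p x : X) = (W (p (T x)) : X)
      rw [hpT, h2]
    · refine (zeroloid_iff_restrict T P N hPP hTP (fun x => ?_) hN).2 hz
      rw [← hp0, hPx, Submodule.coe_eq_zero]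
  · rintro ⟨P, U, V, hPP, hTP, hU, hV, hz⟩
    have hPPx : ∀ x, P (P x) = P x := fun x => DFunLike.congr_fun hPP x
    have hTPx : ∀ x, T (P x) = P (T x) := fun x => DFunLike.congr_fun hTP x
    have hUx : ∀ x, P x = T (U x) := fun x => DFunLike.congr_fun hU x
    have hVx : ∀ x, P x = V (T x) := fun x => DFunLike.congr_fun hV x
    let M : Submodule ℂ X := LinearMap.ker ((1 - P : X →L[ℂ] X) : X →ₗ[ℂ] X)
    let N : Submodule ℂ X := LinearMap.ker (P : X →ₗ[ℂ] X)
    have hM : ∀ x, x ∈ M ↔ P x = x := by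
      intro x
      have : x ∈ M ↔ x - P x = 0 := Iff.rfl
      rw [this, sub_eq_zero, eq_comm]
    have hN : ∀ x, x ∈ N ↔ P x = 0 := fun x => Iff.rfl
    have hMc : IsClosed (M : Set X) := (1 - P : X →L[ℂ] X).isClosed_ker
    have hNc : IsClosed (N : Set X) := P.isClosed_ker
    have hTM : ∀ x ∈ M, T x ∈ M := by
      intro x hx
      rw [hM] at hx ⊢
      rw [← hTPx, hx]
    have hTN : ∀ x ∈ N, T x ∈ N := by
      intro x hx
      rw [hN] at hx ⊢
      rw [← hTPx, hx, map_zero]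
    refine ⟨M, N, ⟨hMc, hNc, hTM, hTN, ?_⟩, ⟨?_, ?_⟩,
      (zeroloid_iff_restrict T P N hPP hTP hN hNc).1 hz⟩
    · constructor
      · rw [Submodule.disjoint_def]
        intro x h1 h2
        rw [← (hM x).1 h1, (hN x).1 h2]
      · rw [codisjoint_iff, eq_top_iff]
        intro x _
        rw [Submodule.mem_sup]
        exact ⟨P x, (hM _).2 (hPPx x), x - P x,
          (hN _).2 (by rw [map_sub, hPPx, sub_self]), by abel⟩
    · intro a b hab
      have h1 := congrArg Subtype.val hab
      rw [restrictCLM_apply_coe T M hTM, restrictCLM_apply_coe T M hTM] at h1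
      apply Subtype.ext
      rw [← (hM a).1 a.2, ← (hM b).1 b.2, hVx, hVx, h1]
    · intro y
      refine ⟨⟨P (U y), (hM _).2 (hPPx _)⟩, Subtype.ext ?_⟩
      rw [restrictCLM_apply_coe T M hTM]
      show T (P (U y)) = y
      rw [hTPx, ← hUx, hPPx, (hM y).1 y.2]
end
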